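/- If U is the product of a canonical form of T-count n, then the least denominator exponent of the quadrant Û₊₊ of its adjoint representation is exactly 2n. -/

import Mathlib

open Matrix Complex

noncomputable section

/-- ω = exp(2πi/3), a primitive third root of unity. -/
def ω : ℂ := exp (2 * Real.pi * I / 3)

/-- ζ = exp(2πi/9), a primitive ninth root of unity. -/
def ζ : ℂ := exp (2 * Real.pi * I / 9)

/-- The qutrit Pauli X matrix. -/
def Xmat : Matrix (Fin 3) (Fin 3) ℂ := !![0,0,1; 1,0,0; 0,1,0]

/-- The qutrit Pauli Z matrix. -/
def Zmat : Matrix (Fin 3) (Fin 3) ℂ := !![1,0,0; 0,ω,0; 0,0,ω^2]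

/-- The qutrit Hadamard matrix H = (1/(i√3))·[[1,1,1],[1,ω,ω²],[1,ω²,ω]]. -/
def Hmat : Matrix (Fin 3) (Fin 3) ℂ :=
  (I * (Real.sqrt 3 : ℂ))⁻¹ • !![1,1,1; 1,ω,ω^2; 1,ω^2,ω]

/-- The qutrit phase matrix S = ζ⁸·diag(1,1,ω). -/
def Smat : Matrix (Fin 3) (Fin 3) ℂ := ζ^8 • !![1,0,0; 0,1,0; 0,0,ω]

/-- The qutrit T matrix T = diag(1,ζ,ζ⁸). -/
def Tmat : Matrix (Fin 3) (Fin 3) ℂ := !![1,0,0; 0,ζ,0; 0,0,ζ^8]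

lemma omega_ne_zero : ω ≠ 0 := Complex.exp_ne_zero _
lemma zeta_ne_zero : ζ ≠ 0 := Complex.exp_ne_zero _

lemma omega_im_pos : 0 < ω.im := by
  have h : ω = Complex.exp ((2 * Real.pi / 3 : ℝ) * I) := by
    rw [ω]; push_cast; ring_nf
  rw [h, Complex.exp_ofReal_mul_I_im]
  apply Real.sin_pos_of_pos_of_lt_pi
  · positivity
  · nlinarith [Real.pi_pos]

lemma omega_ne_one : ω ≠ 1 := by
  intro h
  have := omega_im_pos
  rw [h] at this
  simp at this

lemma omega_cube : ω ^ 3 = 1 := by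
  rw [ω, ← Complex.exp_nat_mul]
  rw [show (3:ℕ) * (2 * Real.pi * I / 3) = 2 * Real.pi * I by push_cast; ring]
  exact Complex.exp_two_pi_mul_I

lemma detX : Xmat.det ≠ 0 := by
  simp [Xmat, Matrix.det_fin_three]

lemma detZ : Zmat.det ≠ 0 := by
  simp [Zmat, Matrix.det_fin_three, omega_ne_zero]

lemma detS : Smat.det ≠ 0 := by
  simp [Smat, Matrix.det_fin_three, omega_ne_zero, zeta_ne_zero]

lemma detT : Tmat.det ≠ 0 := by
  simp [Tmat, Matrix.det_fin_three, zeta_ne_zero]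

lemma detH : Hmat.det ≠ 0 := by
  rw [Hmat, Matrix.det_smul]
  apply mul_ne_zero
  · apply pow_ne_zero
    apply inv_ne_zero
    apply mul_ne_zero Complex.I_ne_zero
    simp [Complex.ofReal_ne_zero]
  · rw [Matrix.det_fin_three]
    simp [Matrix.vecHead, Matrix.vecTail]
    intro h
    have h3 : ω ^ 3 = 1 := omega_cube
    have key : 3 * ω * (ω - 1) = 0 := by linear_combination h + ω * h3
    rcases mul_eq_zero.mp key with h' | h'
    · rcases mul_eq_zero.mp h' with h'' | h''
      · norm_num at h''
      · exact omega_ne_zero h''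
    · exact omega_ne_one (by linear_combination h')

/-- X as an element of GL(3, ℂ). -/
def Xg : GL (Fin 3) ℂ := Matrix.GeneralLinearGroup.mkOfDetNeZero Xmat detX

/-- Z as an element of GL(3, ℂ). -/
def Zg : GL (Fin 3) ℂ := Matrix.GeneralLinearGroup.mkOfDetNeZero Zmat detZ

/-- H as an element of GL(3, ℂ). -/
def Hg : GL (Fin 3) ℂ := Matrix.GeneralLinearGroup.mkOfDetNeZero Hmat detH

/-- S as an element of GL(3, ℂ). -/
def Sg : GL (Fin 3) ℂ := Matrix.GeneralLinearGroup.mkOfDetNeZero Smat detS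

/-- T as an element of GL(3, ℂ). -/
def Tg : GL (Fin 3) ℂ := Matrix.GeneralLinearGroup.mkOfDetNeZero Tmat detT

/-- The Clifford group 𝒞: the subgroup of GL(3,ℂ) generated by H and S. -/
def Cliff : Subgroup (GL (Fin 3) ℂ) := Subgroup.closure {Hg, Sg}

/-- The Clifford+T group: the subgroup of GL(3,ℂ) generated by H, S and T. -/
def CliffT : Subgroup (GL (Fin 3) ℂ) := Subgroup.closure {Hg, Sg, Tg}

/-- The subgroup 𝒮 of GL(3,ℂ) generated by S and X. -/
def Sgrp : Subgroup (GL (Fin 3) ℂ) := Subgroup.closure {Sg, Xg}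

/-- Letters of words over the alphabet {H, S, T}. -/
inductive Letter : Type
  | H : Letter
  | S : Letter
  | T : Letter
  deriving DecidableEq

/-- The gate associated to a letter. -/
def Letter.g : Letter → GL (Fin 3) ℂ
  | .H => Hg
  | .S => Sg
  | .T => Tg

/-- The product of the letters of a word. -/
def wordProd (w : List Letter) : GL (Fin 3) ℂ := (w.map Letter.g).prod

/-- The allowed prefixes of a canonical form: ε, T, H²T. -/
def Prefixes : Set (List Letter) := {[], [.T], [.H, .H, .T]}

/-- The allowed syllables of a canonical form: HT, H³T, SHT, SH³T, S²HT, S²H³T. -/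
def Syllables : Set (List Letter) :=
  {[.H, .T], [.H, .H, .H, .T], [.S, .H, .T],
   [.S, .H, .H, .H, .T], [.S, .S, .H, .T], [.S, .S, .H, .H, .H, .T]}

/-- The T-count of a canonical form with prefix `p` and syllable list `ss`:
`k` if the prefix is empty and `k+1` otherwise, where `k` is the number of syllables. -/
def TCount (p : List Letter) (ss : List (List Letter)) : ℕ :=
  ss.length + (if p = [] then 0 else 1)

/-- P₊ = (P + P²)/√6. -/
def Pplus (P : Matrix (Fin 3) (Fin 3) ℂ) : Matrix (Fin 3) (Fin 3) ℂ :=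
  ((Real.sqrt 6 : ℂ))⁻¹ • (P + P ^ 2)

/-- P₋ = i(P − P²)/√6. -/
def Pminus (P : Matrix (Fin 3) (Fin 3) ℂ) : Matrix (Fin 3) (Fin 3) ℂ :=
  (I * ((Real.sqrt 6 : ℂ))⁻¹) • (P - P ^ 2)

/-- The ordered tuple (Q₁, …, Q₈) = (Z₊, X₊, (XZ)₊, (XZ²)₊, Z₋, X₋, (XZ)₋, (XZ²)₋). -/
def Q : Fin 8 → Matrix (Fin 3) (Fin 3) ℂ :=
  ![Pplus Zmat, Pplus Xmat, Pplus (Xmat * Zmat), Pplus (Xmat * Zmat ^ 2),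
    Pminus Zmat, Pminus Xmat, Pminus (Xmat * Zmat), Pminus (Xmat * Zmat ^ 2)]

/-- The adjoint representation Û of U, the 8×8 real matrix with
entries Û_{ij} = tr(Qᵢ U Qⱼ U†). -/
def adj (U : Matrix (Fin 3) (Fin 3) ℂ) : Matrix (Fin 8) (Fin 8) ℝ :=
  Matrix.of fun i j => (Matrix.trace (Q i * U * Q j * Uᴴ)).re

/-- The top-left 4×4 quadrant Û₊₊. -/
def blockPP (A : Matrix (Fin 8) (Fin 8) ℝ) : Matrix (Fin 4) (Fin 4) ℝ :=
  Matrix.of fun i j => A ⟨i.val, by omega⟩ ⟨j.val, by omega⟩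

/-- The top-right 4×4 quadrant Û₊₋. -/
def blockPM (A : Matrix (Fin 8) (Fin 8) ℝ) : Matrix (Fin 4) (Fin 4) ℝ :=
  Matrix.of fun i j => A ⟨i.val, by omega⟩ ⟨j.val + 4, by omega⟩

/-- The bottom-left 4×4 quadrant Û₋₊. -/
def blockMP (A : Matrix (Fin 8) (Fin 8) ℝ) : Matrix (Fin 4) (Fin 4) ℝ :=
  Matrix.of fun i j => A ⟨i.val + 4, by omega⟩ ⟨j.val, by omega⟩

/-- The bottom-right 4×4 quadrant Û₋₋. -/
def blockMM (A : Matrix (Fin 8) (Fin 8) ℝ) : Matrix (Fin 4) (Fin 4) ℝ :=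
  Matrix.of fun i j => A ⟨i.val + 4, by omega⟩ ⟨j.val + 4, by omega⟩

/-- α = sin(2π/9). -/
def αR : ℝ := Real.sin (2 * Real.pi / 9)

/-- The ring ℤ[α]: the subring of ℝ generated by 1/2 and α. -/
def Zα : Subring ℝ := Subring.closure {1/2, αR}

/-- The ring ℤ[1/2, 1/α]: the subring of ℝ generated by 1/2, α and α⁻¹. -/
def Zhα : Subring ℝ := Subring.closure {1/2, αR, αR⁻¹}

lemma alpha_mem_Zα : αR ∈ Zα := Subring.subset_closure (by simp)

/-!
Each of the Pauli matrices `P = Z, X, XZ, XZ²` satisfies `P + P² = w w† - 1`, where the vectors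
`w₀, …, w₃` are `√3` times members of mutually unbiased bases. Hence for unitary `U` the entries of
`Û₊₊` are `(|wᵢ† U wⱼ|² - 3) / 6`, and `3` generates the ideal `α⁶ ℤ[α]`, so everything is governed
by the row vectors `wᵢ† U`.

These rows lie in a lattice over `ℤ[α, i]` which `H` and `S` preserve and which `T` scales down by
at most one power of `α`; this gives the upper bound `2n`. For the lower bound, the two quantities
`x₀` and `x₀ + x₁ + x₂` of a row `x` have residues modulo `α` which `H` swaps up to units, and every
syllable returns the residue pattern (zero, nonzero) while gaining exactly one factor `α⁻¹`. Finally
`ℤ[α] / α = 𝔽₃`, where `a² + b² = 0` only for `a = b = 0`, so a nonzero residue of `wᵢ† U wⱼ`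
survives in the norm square.
-/

section Trigonometry

/-- The real part `β = cos (2π/9)` of `ζ`. -/
def βR : ℝ := Real.cos (2 * Real.pi / 9)

lemma αR_pos : 0 < αR :=
  Real.sin_pos_of_pos_of_lt_pi (by positivity) (by linarith [Real.pi_pos])

lemma αR_ne_zero : αR ≠ 0 := αR_pos.ne'

lemma αR_sq : αR ^ 2 = 1 - βR ^ 2 := Real.sin_sq _

lemma cos_two_pi_div_three : Real.cos (2 * Real.pi / 3) = -1 / 2 := by
  rw [show 2 * Real.pi / 3 = Real.pi - Real.pi / 3 by ring, Real.cos_pi_sub,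
    Real.cos_pi_div_three]
  norm_num

lemma sin_two_pi_div_three : Real.sin (2 * Real.pi / 3) = √3 / 2 := by
  rw [show 2 * Real.pi / 3 = Real.pi - Real.pi / 3 by ring, Real.sin_pi_sub,
    Real.sin_pi_div_three]

lemma βR_cubic : 8 * βR ^ 3 - 6 * βR + 1 = 0 := by
  have h := Real.cos_three_mul (2 * Real.pi / 9)
  rw [show 3 * (2 * Real.pi / 9) = 2 * Real.pi / 3 by ring, cos_two_pi_div_three, ← βR] at h
  linear_combination -2 * h

lemma sqrt_three_eq : √3 = αR ^ 3 * (64 * βR ^ 2 * (2 * βR ^ 2 - 1)) := by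
  have h := Real.sin_three_mul (2 * Real.pi / 9)
  rw [show 3 * (2 * Real.pi / 9) = 2 * Real.pi / 3 by ring, sin_two_pi_div_three, ← αR] at h
  linear_combination 2 * h + (-8 * αR - 64 * αR * βR ^ 2 * (2 * βR ^ 2 - 1)) * αR_sq +
    αR * (16 * βR ^ 3 - 12 * βR - 2) * βR_cubic

/-- Doubling the angle `2π/9` three times gives `16π/9`, whose cosine is again `β`. -/
lemma βR_eq_of_αR : βR = 2 * (2 * (1 - 2 * αR ^ 2) ^ 2 - 1) ^ 2 - 1 := by
  rw [αR_sq]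
  linear_combination (-16 * βR ^ 5 + 20 * βR ^ 3 + 2 * βR ^ 2 - 5 * βR - 1) * βR_cubic

lemma one_add_βR_mul : (1 + βR) * (8 * βR ^ 2 - 8 * βR + 2) = 1 := by
  linear_combination βR_cubic

lemma zeta_eq : ζ = βR + αR * I := by
  rw [ζ, βR, αR, show (2 * Real.pi * I / 9 : ℂ) = ((2 * Real.pi / 9 : ℝ) : ℂ) * I by
    push_cast; ring, Complex.exp_mul_I, Complex.ofReal_cos, Complex.ofReal_sin]

lemma zeta_pow_three : ζ ^ 3 = ω := by
  rw [ζ, ω, ← Complex.exp_nat_mul]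
  congr 1
  push_cast
  ring

lemma omega_sq_sq : (ω ^ 2) ^ 2 = ω := by
  linear_combination ω * omega_cube

lemma zeta_pow_nine : ζ ^ 9 = 1 := by
  linear_combination (ζ ^ 6 + ζ ^ 3 * ω + ω ^ 2) * zeta_pow_three + omega_cube

lemma zeta_pow_eight_pow_nine : (ζ ^ 8) ^ 9 = 1 := by
  rw [pow_right_comm, zeta_pow_nine, one_pow]

lemma omega_sq_add_omega_add_one : ω ^ 2 + ω + 1 = 0 :=
  (mul_eq_zero.mp (by linear_combination omega_cube : (ω - 1) * (ω ^ 2 + ω + 1) = 0)).resolve_left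
    (sub_ne_zero.mpr omega_ne_one)

lemma omega_eq : ω = (-1 + I * (√3 : ℝ)) / 2 := by
  rw [ω, show (2 * Real.pi * I / 3 : ℂ) = ((2 * Real.pi / 3 : ℝ) : ℂ) * I by push_cast; ring,
    Complex.exp_mul_I, ← Complex.ofReal_cos, ← Complex.ofReal_sin, cos_two_pi_div_three,
    sin_two_pi_div_three]
  push_cast
  ring

lemma I_mul_sqrt_three : I * (√3 : ℝ) = 2 * ω + 1 := by
  rw [omega_eq]
  ring

lemma omega_sub_one : ω - 1 = -ω ^ 2 * (I * (√3 : ℝ)) := by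
  rw [I_mul_sqrt_three]
  linear_combination (2 * ω - 1) * omega_sq_add_omega_add_one

lemma conj_zeta : (starRingEnd ℂ) ζ = ζ ^ 8 := by
  have h : (starRingEnd ℂ) ζ * ζ = 1 := by
    have hα : (αR : ℂ) ^ 2 = 1 - βR ^ 2 := mod_cast αR_sq
    rw [zeta_eq, map_add, map_mul, conj_ofReal, conj_ofReal, conj_I]
    linear_combination hα - αR ^ 2 * I_sq
  linear_combination ζ ^ 8 * h - (starRingEnd ℂ) ζ * zeta_pow_nine

lemma conj_omega : (starRingEnd ℂ) ω = ω ^ 2 := by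
  rw [← zeta_pow_three, map_pow, conj_zeta]
  linear_combination (ζ ^ 15 + ζ ^ 6) * zeta_pow_nine

end Trigonometry

section FractionalIdeals

lemma half_mem_Zα : (1 / 2 : ℝ) ∈ Zα := Subring.subset_closure (by simp)

lemma βR_mem_Zα : βR ∈ Zα := by
  have h2 : (2 : ℝ) ∈ Zα := ofNat_mem Zα 2
  rw [βR_eq_of_αR]
  exact sub_mem (mul_mem h2 (pow_mem (sub_mem (mul_mem h2 (pow_mem (sub_mem (one_mem _)
    (mul_mem h2 (pow_mem alpha_mem_Zα 2))) 2)) (one_mem _)) 2)) (one_mem _)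

/-- The fractional ideal `αᵏ ℤ[α]`, for `k : ℤ`, as an additive subgroup of `ℝ`. -/
def alphaIdeal (k : ℤ) : AddSubgroup ℝ :=
  Zα.toAddSubgroup.comap (AddMonoidHom.mulLeft (αR ^ (-k)))

lemma mem_alphaIdeal {k : ℤ} {x : ℝ} : x ∈ alphaIdeal k ↔ αR ^ (-k) * x ∈ Zα := Iff.rfl

lemma mem_alphaIdeal_zero {x : ℝ} : x ∈ alphaIdeal 0 ↔ x ∈ Zα := by simp [mem_alphaIdeal]

lemma pow_mul_mem_Zα_iff {k : ℕ} {x : ℝ} : αR ^ k * x ∈ Zα ↔ x ∈ alphaIdeal (-k) := by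
  simp [mem_alphaIdeal]

lemma mul_mem_alphaIdeal {j k : ℤ} {x y : ℝ} (hx : x ∈ alphaIdeal j) (hy : y ∈ alphaIdeal k) :
    x * y ∈ alphaIdeal (j + k) := by
  rw [mem_alphaIdeal] at *
  rw [neg_add, zpow_add₀ αR_ne_zero, mul_mul_mul_comm]
  exact mul_mem hx hy

lemma zpow_mem_alphaIdeal (k : ℤ) : αR ^ k ∈ alphaIdeal k := by
  rw [mem_alphaIdeal, ← zpow_add₀ αR_ne_zero, neg_add_cancel, zpow_zero]
  exact one_mem _

lemma alphaIdeal_antitone : Antitone alphaIdeal := by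
  intro j k hjk x hx
  have hpow : αR ^ (k - j) ∈ Zα := by
    lift k - j to ℕ using sub_nonneg.mpr hjk with n
    simpa using pow_mem alpha_mem_Zα n
  have h := mul_mem hpow (mem_alphaIdeal.mp hx)
  rwa [← mul_assoc, ← zpow_add₀ αR_ne_zero, show k - j + -k = -j by ring] at h

/-- `r` generates the fractional ideal `αᵏ ℤ[α]`: it is `αᵏ` times a unit of `ℤ[α]`. -/
structure HasAlphaOrder (r : ℝ) (k : ℤ) : Prop where
  mem : r ∈ alphaIdeal k
  inv_mem : r⁻¹ ∈ alphaIdeal (-k)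
  ne_zero : r ≠ 0

namespace HasAlphaOrder

lemma mul {r s : ℝ} {j k : ℤ} (hr : HasAlphaOrder r j) (hs : HasAlphaOrder s k) :
    HasAlphaOrder (r * s) (j + k) where
  mem := mul_mem_alphaIdeal hr.mem hs.mem
  inv_mem := by
    rw [mul_inv, neg_add]
    exact mul_mem_alphaIdeal hr.inv_mem hs.inv_mem
  ne_zero := mul_ne_zero hr.ne_zero hs.ne_zero

lemma mul_mem_iff {r x : ℝ} {j k : ℤ} (hr : HasAlphaOrder r j) :
    r * x ∈ alphaIdeal (j + k) ↔ x ∈ alphaIdeal k := by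
  refine ⟨fun h ↦ ?_, mul_mem_alphaIdeal hr.mem⟩
  simpa [hr.ne_zero] using mul_mem_alphaIdeal hr.inv_mem h

lemma αR_zpow (k : ℤ) : HasAlphaOrder (αR ^ k) k where
  mem := zpow_mem_alphaIdeal k
  inv_mem := by simpa using zpow_mem_alphaIdeal (-k)
  ne_zero := zpow_ne_zero k αR_ne_zero

lemma of_mul_eq_one {u v : ℝ} (hu : u ∈ Zα) (hv : v ∈ Zα) (huv : u * v = 1) :
    HasAlphaOrder u 0 where
  mem := mem_alphaIdeal_zero.mpr hu
  inv_mem := by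
    rw [inv_eq_of_mul_eq_one_right huv]
    exact mem_alphaIdeal_zero.mpr hv
  ne_zero := left_ne_zero_of_mul_eq_one huv

end HasAlphaOrder

lemma hasAlphaOrder_two : HasAlphaOrder 2 0 :=
  .of_mul_eq_one (ofNat_mem Zα 2) half_mem_Zα (by norm_num)

lemma hasAlphaOrder_one_sub_βR : HasAlphaOrder (1 - βR) 2 := by
  have hu : 8 * βR ^ 2 - 8 * βR + 2 ∈ Zα :=
    add_mem (sub_mem (mul_mem (ofNat_mem Zα 8) (pow_mem βR_mem_Zα 2))
      (mul_mem (ofNat_mem Zα 8) βR_mem_Zα)) (ofNat_mem Zα 2)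
  have hunit := HasAlphaOrder.of_mul_eq_one hu (add_mem (one_mem _) βR_mem_Zα)
    (by rw [mul_comm, one_add_βR_mul])
  convert (HasAlphaOrder.αR_zpow 2).mul hunit using 1
  swap; · norm_num
  rw [zpow_ofNat, αR_sq]
  linear_combination (βR - 1) * one_add_βR_mul

lemma hasAlphaOrder_sqrt_three : HasAlphaOrder √3 3 := by
  have hβ2 : βR ^ 2 ∈ Zα := pow_mem βR_mem_Zα 2
  have hβ : 2 * βR ^ 2 - 1 ∈ Zα := sub_mem (mul_mem (ofNat_mem Zα 2) hβ2) (one_mem _)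
  have hu : 64 * βR ^ 2 * (2 * βR ^ 2 - 1) ∈ Zα := mul_mem (mul_mem (ofNat_mem Zα 64) hβ2) hβ
  have hv : (2 * βR ^ 2 - 1) * (1 - βR - 2 * βR ^ 2) ^ 2 ∈ Zα :=
    mul_mem hβ (pow_mem (sub_mem (sub_mem (one_mem _) βR_mem_Zα)
      (mul_mem (ofNat_mem Zα 2) hβ2)) 2)
  have hunit := HasAlphaOrder.of_mul_eq_one hu hv
    (by linear_combination (128 * βR ^ 7 + 128 * βR ^ 6 - 128 * βR ^ 5 - 112 * βR ^ 4 +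
      48 * βR ^ 3 + 28 * βR ^ 2 - 6 * βR - 1) * βR_cubic)
  convert (HasAlphaOrder.αR_zpow 3).mul hunit using 1
  swap; · norm_num
  rw [zpow_ofNat, sqrt_three_eq]

lemma hasAlphaOrder_three : HasAlphaOrder 3 6 := by
  convert hasAlphaOrder_sqrt_three.mul hasAlphaOrder_sqrt_three using 1
  · rw [Real.mul_self_sqrt (by norm_num)]
  · norm_num

end FractionalIdeals

section ResidueField

lemma exists_isIntegral_two_pow_mul {x : ℝ} (hx : x ∈ Zα) : ∃ n : ℕ, IsIntegral ℤ (2 ^ n * x) := by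
  have hpow (n : ℕ) : IsIntegral ℤ ((2 : ℝ) ^ n) := (isIntegral_natCast 2).pow n
  induction hx using Subring.closure_induction with
  | mem x hx =>
    refine ⟨1, ?_⟩
    obtain rfl | rfl := hx
    · simpa using isIntegral_one
    · have h := Real.isIntegral_two_mul_sin_rat_mul_pi (2 / 9)
      rw [pow_one, αR]
      convert h using 3
      push_cast
      ring
  | zero => exact ⟨0, by simpa using isIntegral_zero⟩
  | one => exact ⟨0, by simpa using isIntegral_one⟩
  | add x y _ _ hx hy =>
    obtain ⟨m, hm⟩ := hx
    obtain ⟨n, hn⟩ := hy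
    refine ⟨m + n, ?_⟩
    rw [show (2 : ℝ) ^ (m + n) * (x + y) = 2 ^ n * (2 ^ m * x) + 2 ^ m * (2 ^ n * y) by ring]
    exact ((hpow n).mul hm).add ((hpow m).mul hn)
  | neg x _ hx =>
    obtain ⟨n, hn⟩ := hx
    exact ⟨n, by simpa using hn.neg⟩
  | mul x y _ _ hx hy =>
    obtain ⟨m, hm⟩ := hx
    obtain ⟨n, hn⟩ := hy
    refine ⟨m + n, ?_⟩
    rw [show (2 : ℝ) ^ (m + n) * (x * y) = 2 ^ m * x * (2 ^ n * y) by ring]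
    exact hm.mul hn

lemma third_notMem_Zα : (3⁻¹ : ℝ) ∉ Zα := by
  intro h
  obtain ⟨n, hn⟩ := exists_isIntegral_two_pow_mul h
  obtain ⟨k, hk⟩ := hn.exists_int_iff_exists_rat.mp ⟨2 ^ n * 3⁻¹, by push_cast; rfl⟩
  have h3 : (3 : ℤ) ∣ 2 ^ n := ⟨k, by
    have : (2 : ℝ) ^ n = 3 * k := by rw [← hk]; ring
    exact_mod_cast this⟩
  have := Int.prime_three.dvd_of_dvd_pow h3
  omega

lemma one_notMem_alphaIdeal_one : (1 : ℝ) ∉ alphaIdeal 1 := by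
  intro h
  have hα : αR⁻¹ ∈ Zα := by simpa [mem_alphaIdeal] using h
  apply third_notMem_Zα
  have h6 : αR ^ 6 * 3⁻¹ ∈ Zα := pow_mul_mem_Zα_iff.mpr hasAlphaOrder_three.inv_mem
  simpa [← mul_assoc, ← mul_pow, αR_ne_zero] using mul_mem (pow_mem hα 6) h6

lemma intCast_mem_alphaIdeal_one_iff {a : ℤ} : (a : ℝ) ∈ alphaIdeal 1 ↔ 3 ∣ a := by
  have h3 : (3 : ℝ) ∈ alphaIdeal 1 := alphaIdeal_antitone (by norm_num) hasAlphaOrder_three.mem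
  constructor
  · intro ha
    by_contra hdvd
    obtain ⟨u, v, huv⟩ := (Int.prime_three.coprime_iff_not_dvd).mpr hdvd
    apply one_notMem_alphaIdeal_one
    rw [show (1 : ℝ) = u • (3 : ℝ) + v • (a : ℝ) by simpa using mod_cast huv.symm]
    exact add_mem (zsmul_mem h3 u) (zsmul_mem ha v)
  · rintro ⟨b, rfl⟩
    rw [show ((3 * b : ℤ) : ℝ) = b • (3 : ℝ) by push_cast; ring]
    exact zsmul_mem h3 b

/-- The residue field `ℤ[α]/α` has three elements, since `1/2 ≡ -1`. -/
lemma exists_intCast_sub_mem_alphaIdeal_one {x : ℝ} (hx : x ∈ Zα) :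
    ∃ a : ℤ, x - a ∈ alphaIdeal 1 := by
  induction hx using Subring.closure_induction with
  | mem x hx =>
    obtain rfl | rfl := hx
    · refine ⟨-1, ?_⟩
      have h := mul_mem_alphaIdeal hasAlphaOrder_two.inv_mem hasAlphaOrder_three.mem
      refine alphaIdeal_antitone (by norm_num) (?_ : _ ∈ alphaIdeal (-0 + 6))
      convert h using 1
      norm_num
    · exact ⟨0, by simpa using zpow_mem_alphaIdeal 1⟩
  | zero => exact ⟨0, by simp⟩
  | one => exact ⟨1, by simp⟩
  | add x y _ _ hx hy =>
    obtain ⟨a, ha⟩ := hx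
    obtain ⟨b, hb⟩ := hy
    exact ⟨a + b, by simpa [add_sub_add_comm] using add_mem ha hb⟩
  | neg x _ hx =>
    obtain ⟨a, ha⟩ := hx
    exact ⟨-a, by simpa [neg_add_eq_sub] using neg_mem ha⟩
  | mul x y _ hy' hx hy =>
    obtain ⟨a, ha⟩ := hx
    obtain ⟨b, hb⟩ := hy
    refine ⟨a * b, ?_⟩
    rw [show x * y - (a * b : ℤ) = (x - a) * y + a • (y - b) by push_cast; ring]
    have h := mul_mem_alphaIdeal ha (mem_alphaIdeal_zero.mpr hy')
    exact add_mem (by simpa using h) (zsmul_mem hb a)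

lemma three_dvd_of_three_dvd_sq_add_sq {a b : ℤ} (h : 3 ∣ a ^ 2 + b ^ 2) : 3 ∣ a ∧ 3 ∣ b := by
  have hcast {n : ℤ} : (3 : ℤ) ∣ n ↔ (n : ZMod 3) = 0 :=
    (ZMod.intCast_zmod_eq_zero_iff_dvd n 3).symm
  have hmod : ∀ u v : ZMod 3, u ^ 2 + v ^ 2 = 0 → u = 0 ∧ v = 0 := by decide
  rw [hcast] at h
  rw [hcast, hcast]
  exact hmod _ _ (by exact_mod_cast h)

/-- The residue field `𝔽₃` contains no square root of `-1`. -/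
lemma mem_alphaIdeal_one_of_sq_add_sq {x y : ℝ} (hx : x ∈ Zα) (hy : y ∈ Zα)
    (h : x ^ 2 + y ^ 2 ∈ alphaIdeal 1) : x ∈ alphaIdeal 1 ∧ y ∈ alphaIdeal 1 := by
  obtain ⟨a, ha⟩ := exists_intCast_sub_mem_alphaIdeal_one hx
  obtain ⟨b, hb⟩ := exists_intCast_sub_mem_alphaIdeal_one hy
  have hsq {z : ℝ} {n : ℤ} (hz : z ∈ Zα) (hzn : z - n ∈ alphaIdeal 1) :
      z ^ 2 - n ^ 2 ∈ alphaIdeal 1 := by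
    have := mul_mem_alphaIdeal hzn (mem_alphaIdeal_zero.mpr (add_mem hz (intCast_mem Zα n)))
    rwa [add_zero, show (z - n) * (z + n) = z ^ 2 - n ^ 2 by ring] at this
  have hab : ((a ^ 2 + b ^ 2 : ℤ) : ℝ) ∈ alphaIdeal 1 := by
    convert sub_mem h (add_mem (hsq hx ha) (hsq hy hb)) using 1
    push_cast
    ring
  obtain ⟨ha3, hb3⟩ := three_dvd_of_three_dvd_sq_add_sq (intCast_mem_alphaIdeal_one_iff.mp hab)
  exact ⟨by simpa using add_mem ha (intCast_mem_alphaIdeal_one_iff.mpr ha3),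
    by simpa using add_mem hb (intCast_mem_alphaIdeal_one_iff.mpr hb3)⟩

end ResidueField

section ComplexIdeals

/-- The fractional ideal `αᵏ ℤ[α, i]` of complex numbers with both coordinates in
`alphaIdeal k`. -/
def gaussIdeal (k : ℤ) : AddSubgroup ℂ :=
  (alphaIdeal k).comap Complex.reAddGroupHom ⊓ (alphaIdeal k).comap Complex.imAddGroupHom

variable {j k : ℤ} {z w : ℂ}

lemma mem_gaussIdeal : z ∈ gaussIdeal k ↔ z.re ∈ alphaIdeal k ∧ z.im ∈ alphaIdeal k := Iff.rfl

lemma ofReal_mem_gaussIdeal {x : ℝ} (hx : x ∈ alphaIdeal k) : (x : ℂ) ∈ gaussIdeal k :=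
  mem_gaussIdeal.mpr ⟨hx, zero_mem _⟩

lemma one_mem_gaussIdeal : (1 : ℂ) ∈ gaussIdeal 0 := by
  simpa using ofReal_mem_gaussIdeal (mem_alphaIdeal_zero.mpr (one_mem Zα))

lemma I_mem_gaussIdeal : I ∈ gaussIdeal 0 := by
  simp [mem_gaussIdeal, mem_alphaIdeal_zero]

lemma gaussIdeal_antitone : Antitone gaussIdeal := fun _ _ h _ hz ↦
  ⟨alphaIdeal_antitone h hz.1, alphaIdeal_antitone h hz.2⟩

lemma mul_mem_gaussIdeal (hz : z ∈ gaussIdeal j) (hw : w ∈ gaussIdeal k) :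
    z * w ∈ gaussIdeal (j + k) := by
  rw [mem_gaussIdeal, mul_re, mul_im]
  exact ⟨sub_mem (mul_mem_alphaIdeal hz.1 hw.1) (mul_mem_alphaIdeal hz.2 hw.2),
    add_mem (mul_mem_alphaIdeal hz.1 hw.2) (mul_mem_alphaIdeal hz.2 hw.1)⟩

lemma mul_mem_gaussIdeal_of_zero (hz : z ∈ gaussIdeal 0) (hw : w ∈ gaussIdeal k) :
    z * w ∈ gaussIdeal k := by
  simpa using mul_mem_gaussIdeal hz hw

lemma pow_mem_gaussIdeal_zero (hz : z ∈ gaussIdeal 0) (n : ℕ) : z ^ n ∈ gaussIdeal 0 := by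
  induction n with
  | zero => simpa using one_mem_gaussIdeal
  | succ n ih => exact pow_succ z n ▸ mul_mem_gaussIdeal_of_zero ih hz

lemma conj_mem_gaussIdeal (hz : z ∈ gaussIdeal k) : (starRingEnd ℂ) z ∈ gaussIdeal k := by
  simpa [mem_gaussIdeal] using hz

lemma HasAlphaOrder.ofReal_mul_mem_iff {r : ℝ} (hr : HasAlphaOrder r j) :
    (r : ℂ) * z ∈ gaussIdeal (j + k) ↔ z ∈ gaussIdeal k := by
  simp only [mem_gaussIdeal, re_ofReal_mul, im_ofReal_mul, hr.mul_mem_iff]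

lemma root_mul_mem_gaussIdeal_iff {n : ℕ} (hz : z ∈ gaussIdeal 0) (hn : z ^ (n + 1) = 1) :
    z * w ∈ gaussIdeal k ↔ w ∈ gaussIdeal k := by
  refine ⟨fun h ↦ ?_, mul_mem_gaussIdeal_of_zero hz⟩
  simpa [← mul_assoc, ← pow_succ, hn] using
    mul_mem_gaussIdeal_of_zero (pow_mem_gaussIdeal_zero hz n) h

lemma zeta_mem_gaussIdeal : ζ ∈ gaussIdeal 0 := by
  rw [zeta_eq]
  refine add_mem (ofReal_mem_gaussIdeal ?_) (mul_mem_gaussIdeal_of_zero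
    (ofReal_mem_gaussIdeal ?_) I_mem_gaussIdeal)
  · exact mem_alphaIdeal_zero.mpr βR_mem_Zα
  · exact mem_alphaIdeal_zero.mpr alpha_mem_Zα

lemma sqrt_three_mul_mem_gaussIdeal_iff :
    (√3 : ℝ) * z ∈ gaussIdeal (k + 3) ↔ z ∈ gaussIdeal k := by
  rw [add_comm, hasAlphaOrder_sqrt_three.ofReal_mul_mem_iff]

lemma I_mul_sqrt_three_mul_mem_iff : I * (√3 : ℝ) * z ∈ gaussIdeal (k + 3) ↔ z ∈ gaussIdeal k := by
  rw [mul_assoc, root_mul_mem_gaussIdeal_iff I_mem_gaussIdeal I_pow_four,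
    sqrt_three_mul_mem_gaussIdeal_iff]

lemma omega_sub_one_mem_gaussIdeal : ω - 1 ∈ gaussIdeal 3 := by
  rw [omega_sub_one, ← zeta_pow_three, ← pow_mul, neg_mul]
  have h := (I_mul_sqrt_three_mul_mem_iff (k := 0)).mpr one_mem_gaussIdeal
  rw [mul_one, zero_add] at h
  exact neg_mem (mul_mem_gaussIdeal_of_zero (pow_mem_gaussIdeal_zero zeta_mem_gaussIdeal _) h)

lemma omega_sq_sub_one_mem_gaussIdeal : ω ^ 2 - 1 ∈ gaussIdeal 3 := by
  simpa [conj_omega] using conj_mem_gaussIdeal omega_sub_one_mem_gaussIdeal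

lemma one_notMem_gaussIdeal_one : (1 : ℂ) ∉ gaussIdeal 1 := fun h ↦
  one_notMem_alphaIdeal_one h.1

lemma three_mem_gaussIdeal : (3 : ℂ) ∈ gaussIdeal 3 := by
  simpa using ofReal_mem_gaussIdeal (alphaIdeal_antitone (by lia) hasAlphaOrder_three.mem)

lemma normSq_mem_alphaIdeal (hz : z ∈ gaussIdeal k) : normSq z ∈ alphaIdeal (k + k) := by
  rw [normSq_apply]
  exact add_mem (mul_mem_alphaIdeal hz.1 hz.1) (mul_mem_alphaIdeal hz.2 hz.2)

lemma mem_gaussIdeal_add_one_of_normSq (hz : z ∈ gaussIdeal k)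
    (hn : normSq z ∈ alphaIdeal (k + k + 1)) : z ∈ gaussIdeal (k + 1) := by
  have hscale (x : ℝ) : αR ^ (-k) * x ∈ alphaIdeal 1 ↔ x ∈ alphaIdeal (k + 1) := by
    simpa using (HasAlphaOrder.αR_zpow (-k)).mul_mem_iff (x := x) (k := k + 1)
  have hnorm : (αR ^ (-k) * z.re) ^ 2 + (αR ^ (-k) * z.im) ^ 2 ∈ alphaIdeal 1 := by
    have h := mul_mem_alphaIdeal (zpow_mem_alphaIdeal (-k + -k)) hn
    rw [zpow_add₀ αR_ne_zero, normSq_apply, show -k + -k + (k + k + 1) = 1 by ring] at h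
    convert h using 1
    ring
  have h := mem_alphaIdeal_one_of_sq_add_sq hz.1 hz.2 hnorm
  exact ⟨(hscale _).mp h.1, (hscale _).mp h.2⟩

end ComplexIdeals

section Lattice

variable {m : ℤ} {x : Fin 3 → ℂ}

/-- The lattice of row vectors `x` with `x₀ ∈ αᵐ ℤ[α, i]`, `x₁ - x₂ ∈ αᵐ⁺² ℤ[α, i]` and
`x₀ + x₁ + x₂ ∈ αᵐ⁺³ ℤ[α, i]`. It is stable under `H` and `S`, and `T` costs one power of `α`. -/
structure InLattice (m : ℤ) (x : Fin 3 → ℂ) : Prop where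
  head : x 0 ∈ gaussIdeal m
  diff : x 1 - x 2 ∈ gaussIdeal (m + 2)
  sum : x 0 + x 1 + x 2 ∈ gaussIdeal (m + 3)

/-- A lattice vector whose pair of residues `(x₀ / αᵐ, (x₀ + x₁ + x₂) / αᵐ⁺³)` modulo `α` is
nonzero. -/
structure IsPrimitive (m : ℤ) (x : Fin 3 → ℂ) : Prop extends InLattice m x where
  not_both : ¬(x 0 ∈ gaussIdeal (m + 1) ∧ x 0 + x 1 + x 2 ∈ gaussIdeal (m + 4))

/-- A lattice vector whose pair of residues `(x₀ / αᵐ, (x₀ + x₁ + x₂) / αᵐ⁺³)` modulo `α` has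
first entry zero and second entry nonzero. -/
structure IsSumDominant (m : ℤ) (x : Fin 3 → ℂ) : Prop extends InLattice m x where
  head_mem : x 0 ∈ gaussIdeal (m + 1)
  sum_notMem : x 0 + x 1 + x 2 ∉ gaussIdeal (m + 4)

lemma IsSumDominant.isPrimitive (hx : IsSumDominant m x) : IsPrimitive m x :=
  ⟨hx.toInLattice, fun h ↦ hx.sum_notMem h.2⟩

lemma mem_gaussIdeal_of_two_mul {k : ℤ} {z : ℂ} (h : 2 * z ∈ gaussIdeal k) : z ∈ gaussIdeal k := by
  rw [← hasAlphaOrder_two.ofReal_mul_mem_iff, zero_add]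
  exact_mod_cast h

lemma mem_gaussIdeal_last_of_head {k : ℤ} (hx : InLattice m x) (hk : k ≤ m + 2)
    (h : x 0 ∈ gaussIdeal k) : x 2 ∈ gaussIdeal k := by
  apply mem_gaussIdeal_of_two_mul
  rw [show 2 * x 2 = x 0 + x 1 + x 2 - x 0 - (x 1 - x 2) by ring]
  exact sub_mem (sub_mem (gaussIdeal_antitone (by lia) hx.sum) h)
    (gaussIdeal_antitone hk hx.diff)

lemma InLattice.last (hx : InLattice m x) : x 2 ∈ gaussIdeal m :=
  mem_gaussIdeal_last_of_head hx (by lia) hx.head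

section Hadamard

lemma I_mul_sqrt_three_ne_zero : (I * (√3 : ℝ) : ℂ) ≠ 0 := by simp

lemma smul_vecMul_Hmat (x : Fin 3 → ℂ) : (I * (√3 : ℝ) : ℂ) • (x ᵥ* Hmat) =
    ![x 0 + x 1 + x 2, x 0 + ω * x 1 + ω ^ 2 * x 2, x 0 + ω ^ 2 * x 1 + ω * x 2] := by
  rw [Hmat, vecMul_smul, smul_inv_smul₀ I_mul_sqrt_three_ne_zero]
  ext i
  fin_cases i <;> simp [vecMul, dotProduct, Fin.sum_univ_three, mul_comm]

lemma vecMul_Hmat_head (x : Fin 3 → ℂ) : I * (√3 : ℝ) * (x ᵥ* Hmat) 0 = x 0 + x 1 + x 2 :=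
  congrFun (smul_vecMul_Hmat x) 0

lemma vecMul_Hmat_diff (x : Fin 3 → ℂ) : (x ᵥ* Hmat) 1 - (x ᵥ* Hmat) 2 = x 1 - x 2 := by
  apply mul_left_cancel₀ I_mul_sqrt_three_ne_zero
  have h (i : Fin 3) := congrFun (smul_vecMul_Hmat x) i
  simp only [Pi.smul_apply, smul_eq_mul] at h
  rw [mul_sub, h, h, I_mul_sqrt_three]
  simp only [cons_val]
  linear_combination (x 2 - x 1) * omega_sq_add_omega_add_one

lemma vecMul_Hmat_sum (x : Fin 3 → ℂ) :
    (x ᵥ* Hmat) 0 + (x ᵥ* Hmat) 1 + (x ᵥ* Hmat) 2 = -(I * (√3 : ℝ) * x 0) := by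
  apply mul_left_cancel₀ I_mul_sqrt_three_ne_zero
  have h (i : Fin 3) := congrFun (smul_vecMul_Hmat x) i
  simp only [Pi.smul_apply, smul_eq_mul] at h
  rw [mul_add, mul_add, h, h, h, I_mul_sqrt_three]
  simp only [cons_val]
  linear_combination (4 * x 0 + x 1 + x 2) * omega_sq_add_omega_add_one

lemma vecMul_Hmat_head_mem_iff {k : ℤ} :
    (x ᵥ* Hmat) 0 ∈ gaussIdeal k ↔ x 0 + x 1 + x 2 ∈ gaussIdeal (k + 3) := by
  rw [← vecMul_Hmat_head, I_mul_sqrt_three_mul_mem_iff]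

lemma vecMul_Hmat_sum_mem_iff {k : ℤ} :
    (x ᵥ* Hmat) 0 + (x ᵥ* Hmat) 1 + (x ᵥ* Hmat) 2 ∈ gaussIdeal (k + 3) ↔
      x 0 ∈ gaussIdeal k := by
  rw [vecMul_Hmat_sum, neg_mem_iff, I_mul_sqrt_three_mul_mem_iff]

lemma InLattice.vecMul_Hmat (hx : InLattice m x) : InLattice m (x ᵥ* Hmat) where
  head := vecMul_Hmat_head_mem_iff.mpr hx.sum
  diff := vecMul_Hmat_diff x ▸ hx.diff
  sum := vecMul_Hmat_sum_mem_iff.mpr hx.head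

lemma IsPrimitive.vecMul_Hmat (hx : IsPrimitive m x) : IsPrimitive m (x ᵥ* Hmat) where
  toInLattice := hx.toInLattice.vecMul_Hmat
  not_both := by
    rw [show m + 4 = m + 1 + 3 by ring, vecMul_Hmat_head_mem_iff, vecMul_Hmat_sum_mem_iff, and_comm,
      add_assoc m]
    exact hx.not_both

lemma IsSumDominant.vecMul_Hmat_Hmat (hx : IsSumDominant m x) :
    IsSumDominant m (x ᵥ* Hmat ᵥ* Hmat) where
  toInLattice := hx.toInLattice.vecMul_Hmat.vecMul_Hmat
  head_mem := by
    rw [vecMul_Hmat_head_mem_iff, vecMul_Hmat_sum_mem_iff]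
    exact hx.head_mem
  sum_notMem := by
    rw [show m + 4 = m + 1 + 3 by ring, vecMul_Hmat_sum_mem_iff, vecMul_Hmat_head_mem_iff,
      add_assoc m]
    exact hx.sum_notMem

end Hadamard

section Phase

lemma vecMul_Smat (x : Fin 3 → ℂ) : x ᵥ* Smat = ζ ^ 8 • ![x 0, x 1, ω * x 2] := by
  ext i
  fin_cases i <;> simp [vecMul, dotProduct, Fin.sum_univ_three, Smat] <;> ring

lemma zeta_pow_eight_mul_mem_iff {k : ℤ} {z : ℂ} : ζ ^ 8 * z ∈ gaussIdeal k ↔ z ∈ gaussIdeal k :=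
  root_mul_mem_gaussIdeal_iff (n := 8) (pow_mem_gaussIdeal_zero zeta_mem_gaussIdeal 8)
    zeta_pow_eight_pow_nine

lemma vecMul_Smat_head_mem_iff {k : ℤ} : (x ᵥ* Smat) 0 ∈ gaussIdeal k ↔ x 0 ∈ gaussIdeal k := by
  simp only [vecMul_Smat, Pi.smul_apply, smul_eq_mul, cons_val_zero, zeta_pow_eight_mul_mem_iff]

lemma vecMul_Smat_sum_mem_iff {k : ℤ} (hx : x 2 ∈ gaussIdeal k) :
    (x ᵥ* Smat) 0 + (x ᵥ* Smat) 1 + (x ᵥ* Smat) 2 ∈ gaussIdeal (k + 3) ↔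
      x 0 + x 1 + x 2 ∈ gaussIdeal (k + 3) := by
  have hω : x 2 * (ω - 1) ∈ gaussIdeal (k + 3) :=
    mul_mem_gaussIdeal hx omega_sub_one_mem_gaussIdeal
  have h : (x ᵥ* Smat) 0 + (x ᵥ* Smat) 1 + (x ᵥ* Smat) 2 =
      ζ ^ 8 * (x 0 + x 1 + x 2 + x 2 * (ω - 1)) := by
    simp [vecMul_Smat]
    ring
  rw [h, zeta_pow_eight_mul_mem_iff, add_mem_cancel_right hω]

lemma InLattice.vecMul_Smat (hx : InLattice m x) : InLattice m (x ᵥ* Smat) where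
  head := vecMul_Smat_head_mem_iff.mpr hx.head
  diff := by
    have h : (x ᵥ* Smat) 1 - (x ᵥ* Smat) 2 = ζ ^ 8 * (x 1 - x 2 - x 2 * (ω - 1)) := by
      simp [_root_.vecMul_Smat]
      ring
    rw [h, zeta_pow_eight_mul_mem_iff]
    exact sub_mem hx.diff (gaussIdeal_antitone (by lia)
      (mul_mem_gaussIdeal hx.last omega_sub_one_mem_gaussIdeal))
  sum := (vecMul_Smat_sum_mem_iff hx.last).mpr hx.sum

lemma InLattice.vecMul_Smat_sum_mem_iff_of_head (hx : InLattice m x)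
    (h : x 0 ∈ gaussIdeal (m + 1)) :
    (x ᵥ* Smat) 0 + (x ᵥ* Smat) 1 + (x ᵥ* Smat) 2 ∈ gaussIdeal (m + 4) ↔
      x 0 + x 1 + x 2 ∈ gaussIdeal (m + 4) := by
  rw [show m + 4 = m + 1 + 3 by ring]
  exact vecMul_Smat_sum_mem_iff (mem_gaussIdeal_last_of_head hx (by lia) h)

lemma IsPrimitive.vecMul_Smat (hx : IsPrimitive m x) : IsPrimitive m (x ᵥ* Smat) where
  toInLattice := hx.toInLattice.vecMul_Smat
  not_both := by
    rintro ⟨hhead, hsum⟩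
    rw [vecMul_Smat_head_mem_iff] at hhead
    exact hx.not_both ⟨hhead, (hx.vecMul_Smat_sum_mem_iff_of_head hhead).mp hsum⟩

lemma IsSumDominant.vecMul_Smat (hx : IsSumDominant m x) : IsSumDominant m (x ᵥ* Smat) where
  toInLattice := hx.toInLattice.vecMul_Smat
  head_mem := vecMul_Smat_head_mem_iff.mpr hx.head_mem
  sum_notMem := (hx.vecMul_Smat_sum_mem_iff_of_head hx.head_mem).not.mpr hx.sum_notMem

end Phase

section TGate

lemma vecMul_Tmat (x : Fin 3 → ℂ) : x ᵥ* Tmat = ![x 0, ζ * x 1, ζ ^ 8 * x 2] := by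
  ext i
  fin_cases i <;> simp [vecMul, dotProduct, Fin.sum_univ_three, Tmat, mul_comm]

lemma zeta_pow_eight_eq : ζ ^ 8 = βR - αR * I := by
  rw [← conj_zeta, zeta_eq, map_add, map_mul, conj_ofReal, conj_ofReal, conj_I]
  ring

lemma vecMul_Tmat_diff (x : Fin 3 → ℂ) : (x ᵥ* Tmat) 1 - (x ᵥ* Tmat) 2 =
    βR * (x 1 - x 2) + I * αR * (x 0 + x 1 + x 2 - x 0) := by
  rw [vecMul_Tmat, zeta_pow_eight_eq, zeta_eq]
  simp
  ring

lemma vecMul_Tmat_sum (x : Fin 3 → ℂ) : (x ᵥ* Tmat) 0 + (x ᵥ* Tmat) 1 + (x ᵥ* Tmat) 2 =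
    (1 - βR : ℝ) * x 0 + (βR * (x 0 + x 1 + x 2) + I * αR * (x 1 - x 2)) := by
  rw [vecMul_Tmat, zeta_pow_eight_eq, zeta_eq]
  simp
  ring

lemma βR_mul_mem_gaussIdeal {k : ℤ} {z : ℂ} (hz : z ∈ gaussIdeal k) : βR * z ∈ gaussIdeal k :=
  mul_mem_gaussIdeal_of_zero (ofReal_mem_gaussIdeal (mem_alphaIdeal_zero.mpr βR_mem_Zα)) hz

lemma I_mul_αR_mul_mem_gaussIdeal {k : ℤ} {z : ℂ} (hz : z ∈ gaussIdeal k) :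
    I * αR * z ∈ gaussIdeal (1 + k) := by
  have hα : (αR : ℂ) ∈ gaussIdeal 1 :=
    ofReal_mem_gaussIdeal (by simpa using zpow_mem_alphaIdeal 1)
  exact mul_mem_gaussIdeal (mul_mem_gaussIdeal_of_zero I_mem_gaussIdeal hα) hz

lemma InLattice.tail_sum_mem (hx : InLattice m x) :
    βR * (x 0 + x 1 + x 2) + I * αR * (x 1 - x 2) ∈ gaussIdeal (m + 3) :=
  add_mem (βR_mul_mem_gaussIdeal hx.sum)
    (gaussIdeal_antitone (by lia) (I_mul_αR_mul_mem_gaussIdeal hx.diff))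

lemma InLattice.vecMul_Tmat (hx : InLattice m x) : InLattice (m - 1) (x ᵥ* Tmat) where
  head := by
    rw [_root_.vecMul_Tmat]
    exact gaussIdeal_antitone (by lia) hx.head
  diff := by
    rw [vecMul_Tmat_diff]
    refine add_mem (βR_mul_mem_gaussIdeal (gaussIdeal_antitone (by lia) hx.diff))
      (gaussIdeal_antitone (by lia) (I_mul_αR_mul_mem_gaussIdeal (k := m) ?_))
    exact sub_mem (gaussIdeal_antitone (by lia) hx.sum) hx.head
  sum := by
    rw [vecMul_Tmat_sum]
    exact add_mem
      (gaussIdeal_antitone (by lia) (hasAlphaOrder_one_sub_βR.ofReal_mul_mem_iff.mpr hx.head))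
      (gaussIdeal_antitone (by lia) hx.tail_sum_mem)

/-- The exact order `2` of `1 - β` turns a nonzero first residue into a nonzero second one. -/
lemma InLattice.isSumDominant_vecMul_Tmat (hx : InLattice m x) (h : x 0 ∉ gaussIdeal (m + 1)) :
    IsSumDominant (m - 1) (x ᵥ* Tmat) where
  toInLattice := hx.vecMul_Tmat
  head_mem := by simpa [_root_.vecMul_Tmat] using hx.head
  sum_notMem := by
    rwa [vecMul_Tmat_sum, show m - 1 + 4 = m + 3 by ring, add_mem_cancel_right hx.tail_sum_mem,
      show m + 3 = 2 + (m + 1) by ring, hasAlphaOrder_one_sub_βR.ofReal_mul_mem_iff]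

lemma IsSumDominant.vecMul_Hmat_Tmat (hx : IsSumDominant m x) :
    IsSumDominant (m - 1) (x ᵥ* Hmat ᵥ* Tmat) := by
  apply hx.toInLattice.vecMul_Hmat.isSumDominant_vecMul_Tmat
  rw [vecMul_Hmat_head_mem_iff, add_assoc]
  exact hx.sum_notMem

end TGate

end Lattice

section Words

variable {m : ℤ} {x : Fin 3 → ℂ}

lemma vecMul_coe_mul (x : Fin 3 → ℂ) (U V : GL (Fin 3) ℂ) :
    x ᵥ* (U * V).val = x ᵥ* U.val ᵥ* V.val := by
  rw [Units.val_mul, vecMul_vecMul]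

lemma wordProd_nil : wordProd [] = 1 := rfl

lemma wordProd_cons (l : Letter) (w : List Letter) : wordProd (l :: w) = l.g * wordProd w := by
  simp [wordProd]

lemma wordProd_append (v w : List Letter) : wordProd (v ++ w) = wordProd v * wordProd w := by
  simp [wordProd]

lemma vecMul_wordProd_cons (x : Fin 3 → ℂ) (l : Letter) (w : List Letter) :
    x ᵥ* (wordProd (l :: w)).val = x ᵥ* l.g.val ᵥ* (wordProd w).val := by
  rw [wordProd_cons, vecMul_coe_mul]

lemma coe_g_H : Letter.H.g.val = Hmat := rfl

lemma coe_g_S : Letter.S.g.val = Smat := rfl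

lemma coe_g_T : Letter.T.g.val = Tmat := rfl

lemma vecMul_wordProd_nil (x : Fin 3 → ℂ) : x ᵥ* (wordProd []).val = x := by
  simp [wordProd_nil]

lemma InLattice.vecMul_wordProd (hx : InLattice m x) (w : List Letter) :
    InLattice (m - w.count .T) (x ᵥ* (wordProd w).val) := by
  induction w generalizing m x with
  | nil => simpa [wordProd_nil] using hx
  | cons l w ih =>
    rw [vecMul_wordProd_cons]
    cases l with
    | H => simpa [coe_g_H] using ih hx.vecMul_Hmat
    | S => simpa [coe_g_S] using ih hx.vecMul_Smat
    | T => simpa [coe_g_T, sub_sub, add_comm] using ih hx.vecMul_Tmat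

lemma IsSumDominant.vecMul_syllable (hx : IsSumDominant m x) {s : List Letter}
    (hs : s ∈ Syllables) : IsSumDominant (m - 1) (x ᵥ* (wordProd s).val) := by
  obtain rfl | rfl | rfl | rfl | rfl | rfl := hs <;>
    simp only [vecMul_wordProd_cons, vecMul_wordProd_nil, coe_g_H, coe_g_S, coe_g_T]
  · exact hx.vecMul_Hmat_Tmat
  · exact hx.vecMul_Hmat_Hmat.vecMul_Hmat_Tmat
  · exact hx.vecMul_Smat.vecMul_Hmat_Tmat
  · exact hx.vecMul_Smat.vecMul_Hmat_Hmat.vecMul_Hmat_Tmat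
  · exact hx.vecMul_Smat.vecMul_Smat.vecMul_Hmat_Tmat
  · exact hx.vecMul_Smat.vecMul_Smat.vecMul_Hmat_Hmat.vecMul_Hmat_Tmat

lemma IsSumDominant.vecMul_flatten (hx : IsSumDominant m x) {ss : List (List Letter)}
    (hss : ∀ s ∈ ss, s ∈ Syllables) :
    IsSumDominant (m - ss.length) (x ᵥ* (wordProd ss.flatten).val) := by
  induction ss generalizing m x with
  | nil => simpa [wordProd_nil] using hx
  | cons s ss ih =>
    rw [List.forall_mem_cons] at hss
    rw [List.flatten_cons, wordProd_append, vecMul_coe_mul]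
    simpa [sub_sub, add_comm] using ih (hx.vecMul_syllable hss.1) hss.2

lemma count_T_flatten {ss : List (List Letter)} (hss : ∀ s ∈ ss, s ∈ Syllables) :
    ss.flatten.count .T = ss.length := by
  induction ss with
  | nil => rfl
  | cons s ss ih =>
    rw [List.forall_mem_cons] at hss
    have hs : s.count .T = 1 := by
      obtain rfl | rfl | rfl | rfl | rfl | rfl := hss.1 <;> rfl
    rw [List.flatten_cons, List.count_append, hs, ih hss.2, List.length_cons, add_comm]

lemma count_T_eq_TCount {p : List Letter} {ss : List (List Letter)} (hp : p ∈ Prefixes)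
    (hss : ∀ s ∈ ss, s ∈ Syllables) : (p ++ ss.flatten).count .T = TCount p ss := by
  rw [List.count_append, count_T_flatten hss, TCount, add_comm]
  congr 1
  obtain rfl | rfl | rfl := hp <;> rfl

end Words

section CliffordGroup

lemma ofReal_sqrt_three_sq : ((√3 : ℝ) : ℂ) ^ 2 = 3 := by
  norm_cast
  exact Real.sq_sqrt (by norm_num)

lemma I_mul_sqrt_three_sq : (I * (√3 : ℝ) : ℂ) ^ 2 = -3 := by
  rw [mul_pow, I_sq, ofReal_sqrt_three_sq, neg_one_mul]

lemma Hmat_sq : Hmat ^ 2 = -!![1, 0, 0; 0, 0, 1; 0, 1, 0] := by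
  rw [sq, Hmat, smul_mul_smul_comm, ← mul_inv, ← sq, I_mul_sqrt_three_sq]
  ext i j
  fin_cases i <;> fin_cases j <;> simp <;>
    grind [omega_cube, omega_sq_add_omega_add_one]

lemma Hmat_pow_four : Hmat ^ 4 = 1 := by
  rw [show 4 = 2 * 2 from rfl, pow_mul, Hmat_sq]
  ext i j
  fin_cases i <;> fin_cases j <;> simp [sq]

lemma Smat_eq_diagonal : Smat = diagonal ![ζ ^ 8, ζ ^ 8, ζ ^ 8 * ω] := by
  ext i j
  fin_cases i <;> fin_cases j <;> simp [Smat]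

lemma Smat_diag_pow_nine : ![ζ ^ 8, ζ ^ 8, ζ ^ 8 * ω] ^ 9 = 1 := by
  have hω : ω ^ 9 = 1 := by rw [pow_mul ω 3 3, omega_cube, one_pow]
  ext i
  fin_cases i <;> simp [mul_pow, zeta_pow_eight_pow_nine, hω]

lemma Smat_pow_nine : Smat ^ 9 = 1 := by
  rw [Smat_eq_diagonal, diagonal_pow, Smat_diag_pow_nine]
  exact diagonal_one

lemma mem_closure_of_mem_Cliff {c : GL (Fin 3) ℂ} (hc : c ∈ Cliff) :
    c ∈ Submonoid.closure {Hg, Sg} := by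
  rw [← Subgroup.closure_toSubmonoid_of_isOfFinOrder]
  · exact hc
  · rintro x (rfl | rfl)
    · exact isOfFinOrder_iff_pow_eq_one.mpr ⟨4, by norm_num, Units.ext Hmat_pow_four⟩
    · exact isOfFinOrder_iff_pow_eq_one.mpr ⟨9, by norm_num, Units.ext Smat_pow_nine⟩

lemma forall_vecMul_of_mem_Cliff {F : (Fin 3 → ℂ) → Prop} (hH : ∀ x, F x → F (x ᵥ* Hmat))
    (hS : ∀ x, F x → F (x ᵥ* Smat)) {c : GL (Fin 3) ℂ} (hc : c ∈ Cliff) :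
    ∀ x, F x → F (x ᵥ* c.val) := by
  replace hc := mem_closure_of_mem_Cliff hc
  induction hc using Submonoid.closure_induction with
  | mem c hmem =>
    obtain rfl | rfl := hmem
    · exact hH
    · exact hS
  | one => simp
  | mul c d _ _ ihc ihd =>
    intro x hx
    rw [vecMul_coe_mul]
    exact ihd _ (ihc x hx)

variable {m : ℤ} {x : Fin 3 → ℂ} {c : GL (Fin 3) ℂ}

lemma InLattice.vecMul_of_mem_Cliff (hx : InLattice m x) (hc : c ∈ Cliff) :
    InLattice m (x ᵥ* c.val) :=
  forall_vecMul_of_mem_Cliff (fun _ ↦ .vecMul_Hmat) (fun _ ↦ .vecMul_Smat) hc x hx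

lemma IsPrimitive.vecMul_of_mem_Cliff (hx : IsPrimitive m x) (hc : c ∈ Cliff) :
    IsPrimitive m (x ᵥ* c.val) :=
  forall_vecMul_of_mem_Cliff (fun _ ↦ .vecMul_Hmat) (fun _ ↦ .vecMul_Smat) hc x hx

end CliffordGroup

section Unitarity

lemma conjTranspose_Hmat : Hmatᴴ = Hmat ^ 3 := by
  rw [pow_succ, Hmat_sq, Hmat, conjTranspose_smul]
  ext i j
  fin_cases i <;> fin_cases j <;> simp [conj_omega, omega_sq_sq]

lemma Hmat_mem_unitaryGroup : Hmat ∈ unitaryGroup (Fin 3) ℂ := by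
  rw [mem_unitaryGroup_iff, star_eq_conjTranspose, conjTranspose_Hmat, ← pow_succ', Hmat_pow_four]

lemma diagonal_mem_unitaryGroup {n : Type*} [Fintype n] [DecidableEq n] {d : n → ℂ} {k : ℕ}
    (hk : k ≠ 0) (hd : d ^ k = 1) : diagonal d ∈ unitaryGroup n ℂ := by
  rw [mem_unitaryGroup_iff, star_eq_conjTranspose, diagonal_conjTranspose, diagonal_mul_diagonal,
    ← diagonal_one]
  congr 1
  ext i
  have hnorm : ‖d i‖ = 1 := Complex.norm_eq_one_of_pow_eq_one (congrFun hd i) hk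
  simp [mul_conj, normSq_eq_norm_sq, hnorm]

lemma Smat_mem_unitaryGroup : Smat ∈ unitaryGroup (Fin 3) ℂ := by
  rw [Smat_eq_diagonal]
  exact diagonal_mem_unitaryGroup (by norm_num) Smat_diag_pow_nine

lemma Tmat_eq_diagonal : Tmat = diagonal ![1, ζ, ζ ^ 8] := by
  ext i j
  fin_cases i <;> fin_cases j <;> simp [Tmat]

lemma Tmat_diag_pow_nine : ![1, ζ, ζ ^ 8] ^ 9 = 1 := by
  ext i
  fin_cases i <;> simp [zeta_pow_nine, zeta_pow_eight_pow_nine]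

lemma Tmat_mem_unitaryGroup : Tmat ∈ unitaryGroup (Fin 3) ℂ := by
  rw [Tmat_eq_diagonal]
  exact diagonal_mem_unitaryGroup (by norm_num) Tmat_diag_pow_nine

lemma mem_unitaryGroup_of_mem_CliffT {U : GL (Fin 3) ℂ} (hU : U ∈ CliffT) :
    U.val ∈ unitaryGroup (Fin 3) ℂ := by
  induction hU using Subgroup.closure_induction with
  | mem U hU =>
    obtain rfl | rfl | rfl := hU
    exacts [Hmat_mem_unitaryGroup, Smat_mem_unitaryGroup, Tmat_mem_unitaryGroup]
  | one => exact one_mem _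
  | mul U V _ _ hU hV => exact mul_mem hU hV
  | inv U _ hU =>
    rw [Units.inv_eq_of_mul_eq_one_right (mem_unitaryGroup_iff.mp hU)]
    exact Unitary.star_mem hU

lemma wordProd_mem_CliffT (w : List Letter) : wordProd w ∈ CliffT := by
  refine Subgroup.list_prod_mem _ fun U hU ↦ Subgroup.subset_closure ?_
  obtain ⟨l, -, rfl⟩ := List.mem_map.mp hU
  cases l <;> simp [Letter.g]

lemma Cliff_le_CliffT : Cliff ≤ CliffT := Subgroup.closure_mono (by grind)

end Unitarity

section MutuallyUnbiasedBases

/-- `√3` times a unit eigenvector of eigenvalue one of `Z`, `X`, `XZ` and `XZ²` respectively. -/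
def pauliVec : Fin 4 → Fin 3 → ℂ :=
  ![![(√3 : ℝ), 0, 0], ![1, 1, 1], ![1, 1, ω], ![1, 1, ω ^ 2]]

lemma Zmat_add_sq : Zmat + Zmat ^ 2 = vecMulVec (pauliVec 0) (star (pauliVec 0)) - 1 := by
  ext i j
  fin_cases i <;> fin_cases j <;> simp [Zmat, sq, vecMulVec, pauliVec] <;>
    grind [omega_cube, omega_sq_add_omega_add_one, ofReal_sqrt_three_sq]

lemma Xmat_add_sq : Xmat + Xmat ^ 2 = vecMulVec (pauliVec 1) (star (pauliVec 1)) - 1 := by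
  ext i j
  fin_cases i <;> fin_cases j <;> simp [Xmat, sq, vecMulVec, pauliVec]

lemma Xmat_mul_Zmat_add_sq :
    Xmat * Zmat + (Xmat * Zmat) ^ 2 = vecMulVec (pauliVec 2) (star (pauliVec 2)) - 1 := by
  ext i j
  fin_cases i <;> fin_cases j <;>
    simp [Xmat, Zmat, sq, vecMulVec, pauliVec, conj_omega] <;> grind [omega_cube]

lemma Xmat_mul_Zmat_sq_add_sq :
    Xmat * Zmat ^ 2 + (Xmat * Zmat ^ 2) ^ 2 =
      vecMulVec (pauliVec 3) (star (pauliVec 3)) - 1 := by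
  ext i j
  fin_cases i <;> fin_cases j <;>
    simp [Xmat, Zmat, sq, vecMulVec, pauliVec, conj_omega] <;> grind [omega_cube]

lemma Q_eq_smul_vecMulVec_sub_one (i : Fin 4) : Q ⟨i, by omega⟩ =
    ((√6 : ℝ) : ℂ)⁻¹ • (vecMulVec (pauliVec i) (star (pauliVec i)) - 1) := by
  fin_cases i <;> refine congrArg (((√6 : ℝ) : ℂ)⁻¹ • ·) ?_
  exacts [Zmat_add_sq, Xmat_add_sq, Xmat_mul_Zmat_add_sq, Xmat_mul_Zmat_sq_add_sq]

lemma trace_mul_vecMulVec_mul {n R : Type*} [Fintype n] [CommSemiring R] (A B : Matrix n n R)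
    (u v : n → R) : trace (A * vecMulVec u v * B) = v ᵥ* B ᵥ* A ⬝ᵥ u := by
  rw [mul_vecMulVec, vecMulVec_mul, trace_vecMulVec, dotProduct_comm, dotProduct_mulVec]

lemma trace_vecMulVec_star_sub_one_conj {n : Type*} [Fintype n] [DecidableEq n]
    {U : Matrix n n ℂ} (hU : U ∈ unitaryGroup n ℂ) (u v : n → ℂ) :
    trace ((vecMulVec u (star u) - 1) * U * (vecMulVec v (star v) - 1) * Uᴴ) =
      normSq (star u ᵥ* U ⬝ᵥ v) - star u ⬝ᵥ u - star v ⬝ᵥ v + Fintype.card n := by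
  have hU₁ : U * Uᴴ = 1 := mem_unitaryGroup_iff.mp hU
  have hU₂ : Uᴴ * U = 1 := mem_unitaryGroup_iff'.mp hU
  have huv : trace (vecMulVec u (star u) * U * vecMulVec v (star v) * Uᴴ) =
      normSq (star u ᵥ* U ⬝ᵥ v) := by
    have h : star v ᵥ* Uᴴ ⬝ᵥ u = star (star u ᵥ* U ⬝ᵥ v) := by
      rw [← star_dotProduct_star, star_vecMul, star_star, dotProduct_mulVec]
    rw [trace_mul_vecMulVec_mul, vecMulVec_mul, vecMul_vecMulVec, smul_dotProduct, smul_eq_mul, h,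
      mul_comm, ← mul_conj, starRingEnd_apply]
  have hu : trace (vecMulVec u (star u) * U * Uᴴ) = star u ⬝ᵥ u := by
    rw [mul_assoc, hU₁, mul_one, trace_vecMulVec, dotProduct_comm]
  have hv : trace (U * vecMulVec v (star v) * Uᴴ) = star v ⬝ᵥ v := by
    rw [trace_mul_vecMulVec_mul, vecMul_vecMul, hU₂, vecMul_one]
  simp only [sub_mul, mul_sub, one_mul, mul_one, trace_sub, huv, hu, hv, hU₁, trace_one]
  ring

lemma star_pauliVec_dotProduct_self (i : Fin 4) : star (pauliVec i) ⬝ᵥ pauliVec i = 3 := by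
  fin_cases i <;> simp [pauliVec, dotProduct, Fin.sum_univ_three, conj_omega] <;>
    grind [omega_cube, ofReal_sqrt_three_sq]

lemma blockPP_adj_apply {U : Matrix (Fin 3) (Fin 3) ℂ} (hU : U ∈ unitaryGroup (Fin 3) ℂ)
    (i j : Fin 4) : blockPP (adj U) i j =
      (normSq (star (pauliVec i) ᵥ* U ⬝ᵥ pauliVec j) - 3) / 6 := by
  have h6 : ((√6 : ℝ) : ℂ)⁻¹ * ((√6 : ℝ) : ℂ)⁻¹ = (6⁻¹ : ℝ) := by
    rw [← mul_inv, ← ofReal_mul, Real.mul_self_sqrt (by norm_num), ofReal_inv]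
  simp only [blockPP, adj, of_apply, Q_eq_smul_vecMulVec_sub_one]
  rw [smul_mul_assoc, smul_mul_smul_comm, smul_mul_assoc, trace_smul,
    trace_vecMulVec_star_sub_one_conj hU, star_pauliVec_dotProduct_self,
    star_pauliVec_dotProduct_self, h6, smul_eq_mul, re_ofReal_mul]
  simp
  ring

end MutuallyUnbiasedBases

section CanonicalForms

variable {m : ℤ} {x : Fin 3 → ℂ}

lemma dotProduct_pauliVec_zero (x : Fin 3 → ℂ) : x ⬝ᵥ pauliVec 0 = (√3 : ℝ) * x 0 := by
  simp [pauliVec, dotProduct, Fin.sum_univ_three, mul_comm]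

lemma dotProduct_pauliVec_one (x : Fin 3 → ℂ) : x ⬝ᵥ pauliVec 1 = x 0 + x 1 + x 2 := by
  simp [pauliVec, dotProduct, Fin.sum_univ_three]

lemma InLattice.dotProduct_one_one_mem (hx : InLattice m x) {w : ℂ} (hw : w - 1 ∈ gaussIdeal 3) :
    x ⬝ᵥ ![1, 1, w] ∈ gaussIdeal (m + 3) := by
  rw [show x ⬝ᵥ ![1, 1, w] = x 0 + x 1 + x 2 + x 2 * (w - 1) by
    simp [dotProduct, Fin.sum_univ_three, mul_sub]]
  exact add_mem hx.sum (mul_mem_gaussIdeal hx.last hw)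

lemma InLattice.dotProduct_pauliVec_mem (hx : InLattice m x) (j : Fin 4) :
    x ⬝ᵥ pauliVec j ∈ gaussIdeal (m + 3) := by
  match j with
  | 0 =>
    rw [dotProduct_pauliVec_zero, sqrt_three_mul_mem_gaussIdeal_iff]
    exact hx.head
  | 1 =>
    rw [dotProduct_pauliVec_one]
    exact hx.sum
  | 2 => exact hx.dotProduct_one_one_mem omega_sub_one_mem_gaussIdeal
  | 3 => exact hx.dotProduct_one_one_mem omega_sq_sub_one_mem_gaussIdeal

lemma sub_three_div_six_mem_alphaIdeal_iff {k : ℤ} (hk : k ≤ 0) {r : ℝ} :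
    (r - 3) / 6 ∈ alphaIdeal k ↔ r ∈ alphaIdeal (k + 6) := by
  have h6 : HasAlphaOrder (6 : ℝ) 6 := by
    simpa [show (2 : ℝ) * 3 = 6 by norm_num] using hasAlphaOrder_two.mul hasAlphaOrder_three
  have h3 : (3 : ℝ) ∈ alphaIdeal (k + 6) := alphaIdeal_antitone (by lia) hasAlphaOrder_three.mem
  rw [← h6.mul_mem_iff, mul_div_cancel₀ _ (by norm_num), add_comm 6, sub_eq_add_neg,
    add_mem_cancel_right (neg_mem h3)]

lemma InLattice.entry_mem_alphaIdeal (hx : InLattice m x) (hm : m ≤ 0) (j : Fin 4) :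
    (normSq (x ⬝ᵥ pauliVec j) - 3) / 6 ∈ alphaIdeal (2 * m) := by
  rw [sub_three_div_six_mem_alphaIdeal_iff (by lia), show 2 * m + 6 = m + 3 + (m + 3) by ring]
  exact normSq_mem_alphaIdeal (hx.dotProduct_pauliVec_mem j)

lemma IsPrimitive.exists_entry_notMem_alphaIdeal (hx : IsPrimitive m x) (hm : m < 0) :
    ∃ j, (normSq (x ⬝ᵥ pauliVec j) - 3) / 6 ∉ alphaIdeal (2 * m + 1) := by
  by_contra! h
  have hmem (j : Fin 4) : x ⬝ᵥ pauliVec j ∈ gaussIdeal (m + 1 + 3) := by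
    rw [show m + 1 + 3 = m + 3 + 1 by ring]
    refine mem_gaussIdeal_add_one_of_normSq (hx.dotProduct_pauliVec_mem j) ?_
    rw [show m + 3 + (m + 3) + 1 = 2 * m + 1 + 6 by ring]
    exact (sub_three_div_six_mem_alphaIdeal_iff (by lia)).mp (h j)
  refine hx.not_both ⟨?_, ?_⟩
  · simpa only [dotProduct_pauliVec_zero, sqrt_three_mul_mem_gaussIdeal_iff] using hmem 0
  · simpa only [dotProduct_pauliVec_one, show m + 1 + 3 = m + 4 by ring] using hmem 1

lemma star_pauliVec (i : Fin 4) : star (pauliVec i) =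
    ![![((√3 : ℝ) : ℂ), 0, 0], ![1, 1, 1], ![1, 1, ω ^ 2], ![1, 1, ω]] i := by
  ext k
  fin_cases i <;> fin_cases k <;> simp [pauliVec, conj_omega, omega_sq_sq]

lemma isSumDominant_star_pauliVec_zero : IsSumDominant 0 (star (pauliVec 0)) := by
  have h3 : ((√3 : ℝ) : ℂ) ∈ gaussIdeal 3 := ofReal_mem_gaussIdeal hasAlphaOrder_sqrt_three.mem
  have h4 : ((√3 : ℝ) : ℂ) ∉ gaussIdeal 4 := by
    simpa using (sqrt_three_mul_mem_gaussIdeal_iff (k := 1)).not.mpr one_notMem_gaussIdeal_one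
  rw [star_pauliVec]
  exact ⟨⟨gaussIdeal_antitone (by lia) h3, by simp, by simpa using h3⟩,
    gaussIdeal_antitone (by lia) h3, by simpa using h4⟩

lemma inLattice_zero_one_one {w : ℂ} (hw : w - 1 ∈ gaussIdeal 3) : InLattice 0 ![1, 1, w] where
  head := one_mem_gaussIdeal
  diff := by
    simpa using neg_mem (gaussIdeal_antitone (by lia) hw)
  sum := by
    have h := add_mem three_mem_gaussIdeal hw
    rw [show 3 + (w - 1) = 1 + 1 + w by ring] at h
    simpa using h

lemma inLattice_star_pauliVec (i : Fin 4) : InLattice 0 (star (pauliVec i)) := by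
  rw [star_pauliVec]
  match i with
  | 0 => exact star_pauliVec 0 ▸ isSumDominant_star_pauliVec_zero.toInLattice
  | 1 => exact inLattice_zero_one_one (by simp)
  | 2 => exact inLattice_zero_one_one omega_sq_sub_one_mem_gaussIdeal
  | 3 => exact inLattice_zero_one_one omega_sub_one_mem_gaussIdeal

lemma exists_isSumDominant_of_mem_Prefixes {p : List Letter} (hp : p ∈ Prefixes) :
    ∃ i, IsSumDominant (-(p.count .T : ℤ)) (star (pauliVec i) ᵥ* (wordProd p).val) := by
  have hx : InLattice 0 (star (pauliVec 1)) := inLattice_star_pauliVec 1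
  have hhead : star (pauliVec 1) 0 ∉ gaussIdeal (0 + 1) := by
    simpa [pauliVec] using one_notMem_gaussIdeal_one
  obtain rfl | rfl | rfl := hp <;>
    simp only [vecMul_wordProd_cons, vecMul_wordProd_nil, coe_g_H, coe_g_T]
  · exact ⟨0, isSumDominant_star_pauliVec_zero⟩
  · exact ⟨1, hx.isSumDominant_vecMul_Tmat hhead⟩
  · refine ⟨1, hx.vecMul_Hmat.vecMul_Hmat.isSumDominant_vecMul_Tmat ?_⟩
    rwa [vecMul_Hmat_head_mem_iff, vecMul_Hmat_sum_mem_iff]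

variable {p : List Letter} {ss : List (List Letter)} {c : GL (Fin 3) ℂ}

lemma inLattice_vecMul_canonicalForm (hp : p ∈ Prefixes) (hss : ∀ s ∈ ss, s ∈ Syllables)
    (hc : c ∈ Cliff) (i : Fin 4) : InLattice (-(TCount p ss : ℤ))
      (star (pauliVec i) ᵥ* (wordProd (p ++ ss.flatten) * c).val) := by
  rw [vecMul_coe_mul, ← count_T_eq_TCount hp hss, ← zero_sub]
  exact ((inLattice_star_pauliVec i).vecMul_wordProd _).vecMul_of_mem_Cliff hc

lemma exists_isPrimitive_vecMul_canonicalForm (hp : p ∈ Prefixes) (hss : ∀ s ∈ ss, s ∈ Syllables)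
    (hc : c ∈ Cliff) : ∃ i, IsPrimitive (-(TCount p ss : ℤ))
      (star (pauliVec i) ᵥ* (wordProd (p ++ ss.flatten) * c).val) := by
  obtain ⟨i, hi⟩ := exists_isSumDominant_of_mem_Prefixes hp
  refine ⟨i, ?_⟩
  rw [← count_T_eq_TCount hp hss, List.count_append, count_T_flatten hss, wordProd_append,
    vecMul_coe_mul, vecMul_coe_mul, Nat.cast_add, neg_add']
  exact (hi.vecMul_flatten hss).isPrimitive.vecMul_of_mem_Cliff hc

end CanonicalForms

/-- If U is the product of a canonical form of T-count n, then the
least denominator exponent of the quadrant Û₊₊ of its adjoint representation is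
exactly 2n. -/
theorem LDE_of_canonical_form
    (p : List Letter) (ss : List (List Letter)) (c : GL (Fin 3) ℂ)
    (hp : p ∈ Prefixes) (hss : ∀ s ∈ ss, s ∈ Syllables) (hc : c ∈ Cliff)
    (U : GL (Fin 3) ℂ) (hU : U = wordProd (p ++ ss.flatten) * c)
    (n : ℕ) (hn : n = TCount p ss) :
    IsLeast {k : ℕ | ∀ i j : Fin 4,
      αR ^ k * blockPP (adj (U : Matrix (Fin 3) (Fin 3) ℂ)) i j ∈ Zα} (2 * n) := by
  subst hU hn
  have hunitary : (wordProd (p ++ ss.flatten) * c).val ∈ unitaryGroup (Fin 3) ℂ :=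
    mem_unitaryGroup_of_mem_CliffT (mul_mem (wordProd_mem_CliffT _) (Cliff_le_CliffT hc))
  simp only [pow_mul_mem_Zα_iff, blockPP_adj_apply hunitary]
  constructor
  · intro i j
    have h := (inLattice_vecMul_canonicalForm hp hss hc i).entry_mem_alphaIdeal (by lia) j
    simpa using h
  · intro k hk
    by_contra! hlt
    obtain ⟨i, hi⟩ := exists_isPrimitive_vecMul_canonicalForm hp hss hc
    obtain ⟨j, hj⟩ := hi.exists_entry_notMem_alphaIdeal (by lia)
    exact hj (alphaIdeal_antitone (by lia) (hk i j))

end
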